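/- Let Δ > 0 and let τ be uniformly distributed on [-Δ/2, Δ/2]. Then for all a, b ∈ ℝ, E_τ[|Q_Δ(a+τ) - Q_Δ(b+τ)|] = |a - b|. -/

import Mathlib

/-!
The quantizer is monotone and commutes with translation by `Δ`. Monotonicity gives the difference
`Q_Δ(a + τ) - Q_Δ(b + τ)` a constant sign, so the expectation is, up to sign, the difference of the
integrals of `Q_Δ` over two windows of length `Δ`. Cancelling the overlap of the windows leaves
`∫ t in b..a, (Q_Δ(t + Δ) - Q_Δ t)`, whose integrand is the constant `Δ`.
-/

open MeasureTheory

/-- The uniform quantizer `Q_Δ(t) = Δ(⌊t/Δ⌋ + 1/2)`. -/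
noncomputable def uniformQuantizer (Δ : ℝ) (t : ℝ) : ℝ :=
  Δ * ((⌊t / Δ⌋ : ℤ) + 1 / 2)

/-- The uniform probability measure on the interval `[-Δ/2, Δ/2]`. -/
noncomputable def uniformDither (Δ : ℝ) : Measure ℝ :=
  (ENNReal.ofReal Δ)⁻¹ • volume.restrict (Set.Icc (-(Δ / 2)) (Δ / 2))

section Integral

variable {E : Type*} [NormedAddCommGroup E] [NormedSpace ℝ E]

lemma integral_add_sub_integral_add_of_map_add [CompleteSpace E] {f : ℝ → E} {T : ℝ} {c : E}
    (hf : ∀ u v, IntervalIntegrable f volume u v) (hfT : ∀ t, f (t + T) = f t + c) (a b : ℝ) :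
    (∫ t in a..a + T, f t) - ∫ t in b..b + T, f t = (a - b) • c := by
  have integral_shift :
      ∫ t in a + T..b + T, f t = (∫ t in a..b, f t) + (b - a) • c := by
    rw [← intervalIntegral.integral_comp_add_right]
    simp_rw [hfT]
    rw [intervalIntegral.integral_add (hf a b) intervalIntegrable_const,
      intervalIntegral.integral_const]
  rw [intervalIntegral.integral_interval_sub_interval_comm (hf _ _) (hf _ _) (hf _ _),
    integral_shift, sub_add_cancel_left, ← neg_smul, neg_sub]

lemma integral_uniformDither {Δ : ℝ} (hΔ : 0 ≤ Δ) (g : ℝ → E) :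
    ∫ τ, g τ ∂(uniformDither Δ) = Δ⁻¹ • ∫ τ in -(Δ / 2)..Δ / 2, g τ := by
  rw [uniformDither, integral_smul_measure, integral_Icc_eq_integral_Ioc,
    ← intervalIntegral.integral_of_le (by linarith), ENNReal.toReal_inv, ENNReal.toReal_ofReal hΔ]

end Integral

lemma integral_abs_sub_of_monotone_of_map_add {f : ℝ → ℝ} {T c : ℝ} (hf : Monotone f)
    (hfT : ∀ t, f (t + T) = f t + c) (s a b : ℝ) :
    ∫ t in s..s + T, |f (a + t) - f (b + t)| = c * |a - b| := by
  wlog hba : b ≤ a generalizing a b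
  · simpa only [abs_sub_comm] using this b a (le_of_not_ge hba)
  have abs_eq (t : ℝ) : |f (a + t) - f (b + t)| = f (a + t) - f (b + t) :=
    abs_of_nonneg (sub_nonneg.2 (hf (by gcongr)))
  have integrable_shift (x : ℝ) :
      IntervalIntegrable (fun t ↦ f (x + t)) volume s (s + T) :=
    (hf.comp (add_right_mono (a := x))).intervalIntegrable
  calc ∫ t in s..s + T, |f (a + t) - f (b + t)|
      = (∫ t in s..s + T, f (a + t)) - ∫ t in s..s + T, f (b + t) := by
        simp_rw [abs_eq]
        exact intervalIntegral.integral_sub (integrable_shift a) (integrable_shift b)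
    _ = (∫ t in a + s..a + s + T, f t) - ∫ t in b + s..b + s + T, f t := by
        simp only [intervalIntegral.integral_comp_add_left, add_assoc]
    _ = (a + s - (b + s)) • c :=
        integral_add_sub_integral_add_of_map_add (fun _ _ ↦ hf.intervalIntegrable) hfT _ _
    _ = c * |a - b| := by
        rw [add_sub_add_right_eq_sub, smul_eq_mul, mul_comm, abs_of_nonneg (sub_nonneg.2 hba)]

lemma monotone_uniformQuantizer {Δ : ℝ} (hΔ : 0 ≤ Δ) : Monotone (uniformQuantizer Δ) := by
  intro s t hst
  unfold uniformQuantizer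
  gcongr

lemma uniformQuantizer_add_self {Δ : ℝ} (hΔ : Δ ≠ 0) (t : ℝ) :
    uniformQuantizer Δ (t + Δ) = uniformQuantizer Δ t + Δ := by
  rw [uniformQuantizer, add_div, div_self hΔ, Int.floor_add_one, uniformQuantizer]
  push_cast
  ring

theorem dithered_quantizer_l1_isometry_general {Δ : ℝ} (hΔ : 0 < Δ) {f : ℝ → ℝ} (hf : Monotone f)
    (hfΔ : ∀ t, f (t + Δ) = f t + Δ) (a b : ℝ) :
    ∫ τ, |f (a + τ) - f (b + τ)| ∂(uniformDither Δ) = |a - b| := by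
  have endpoint : Δ / 2 = -(Δ / 2) + Δ := by ring
  calc ∫ τ, |f (a + τ) - f (b + τ)| ∂(uniformDither Δ)
      = Δ⁻¹ • ∫ τ in -(Δ / 2)..-(Δ / 2) + Δ, |f (a + τ) - f (b + τ)| := by
        rw [integral_uniformDither hΔ.le, ← endpoint]
    _ = Δ⁻¹ * (Δ * |a - b|) := by
        rw [integral_abs_sub_of_monotone_of_map_add hf hfΔ, smul_eq_mul]
    _ = |a - b| := inv_mul_cancel_left₀ hΔ.ne' _

/-- For `τ` uniform on `[-Δ/2, Δ/2]` and any `a, b ∈ ℝ`,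
`E_τ[|Q_Δ(a+τ) - Q_Δ(b+τ)|] = |a - b|`. -/
theorem dithered_quantizer_l1_isometry (Δ : ℝ) (hΔ : 0 < Δ) (a b : ℝ) :
    ∫ τ, |uniformQuantizer Δ (a + τ) - uniformQuantizer Δ (b + τ)| ∂(uniformDither Δ)
      = |a - b| :=
  dithered_quantizer_l1_isometry_general hΔ (monotone_uniformQuantizer hΔ.le)
    (uniformQuantizer_add_self hΔ.ne') a b
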